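/- arXiv:2506.21836 — 2 statements merged into one kernel-verified Lean document; each statement's English description precedes it below -/
import Mathlib

section
/- Characterization of the intersection initial segment rule: Let X be a finite set with |X| ≥ 3. An SRS R : ℛ(𝔛) → ℛ(X) satisfies NT, WIVIP, IWS, IBS, and INUI if and only if R = R^IIS. -/
/-!
Social ranking solutions (SRSs).  The set of individuals is a finite type `X`;
coalitions are elements of `Finset X` (so the domain of a power relation is the
whole power set `𝔛 = 2^X`).  A weak order `≿ ∈ ℛ(𝔛)` is encoded as a relation
`r : Finset X → Finset X → Prop` together with (when needed) its list of
equivalence classes `L = [Σ₁, …, Σ_l]` in strictly decreasing order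
(`IsClassList r L`).
-/

namespace SocialRanking

variable {X : Type*} [Fintype X] [DecidableEq X]

/-- A weak order: a reflexive, complete and transitive binary relation. -/
def IsWeakOrder {A : Type*} (r : A → A → Prop) : Prop :=
  Reflexive r ∧ (∀ a b, r a b ∨ r b a) ∧ Transitive r

/-- A social ranking solution maps every weak order on `2^X` to a weak order on `X`. -/
def IsSRS (R : (Finset X → Finset X → Prop) → X → X → Prop) : Prop :=
  ∀ r, IsWeakOrder r → IsWeakOrder (R r)

/-- `IsClassList r L` : `L = [Σ₁, …, Σ_l]` is the list of the equivalence classes of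
the weak order `r` on `2^X`, in strictly decreasing order (`≿ : Σ₁ ≻ ⋯ ≻ Σ_l`):
every class is nonempty, every coalition lies in exactly one class, and
`S ≿ T ↔ i ≤ j` whenever `S ∈ Σᵢ` and `T ∈ Σⱼ` (0-based indices). -/
def IsClassList (r : Finset X → Finset X → Prop) (L : List (Finset (Finset X))) : Prop :=
  (∀ C ∈ L, C.Nonempty) ∧
  (∀ S : Finset X, ∃! i : ℕ, i < L.length ∧ S ∈ L.getD i ∅) ∧
  (∀ i j : ℕ, i < L.length → j < L.length →
    ∀ S ∈ L.getD i ∅, ∀ T ∈ L.getD j ∅, (r S T ↔ i ≤ j))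

/-- The asymmetric (strict) part `P` of a relation. -/
def StrictPart {A : Type*} (p : A → A → Prop) (a b : A) : Prop := p a b ∧ ¬ p b a

/-- The symmetric part `I` (indifference) of a relation. -/
def IndiffPart {A : Type*} (p : A → A → Prop) (a b : A) : Prop := p a b ∧ p b a

/-- The restrictions of `p` and `q` to `{x, y}` coincide. -/
def AgreeOn (p q : X → X → Prop) (x y : X) : Prop :=
  ∀ a ∈ ({x, y} : Set X), ∀ b ∈ ({x, y} : Set X), (p a b ↔ q a b)

/-- `|Δ[x]|` : the number of coalitions in `Δ` containing `x`. -/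
def count (Δ : Finset (Finset X)) (x : X) : ℕ := (Δ.filter (fun S => x ∈ S)).card

/-! ### Independence axioms and further axioms -/

/-- WIVIP: for a dichotomous `≿ : Σ₁ ≻ Σ₂`, any `x ∈ ⋂Σ₁` is socially strictly above
any `y ∉ ⋂Σ₁`. -/
def WIVIP (R : (Finset X → Finset X → Prop) → X → X → Prop) : Prop :=
  ∀ (r : Finset X → Finset X → Prop) (C₁ C₂ : Finset (Finset X)),
    IsClassList r [C₁, C₂] →
    ∀ x y : X, (∀ S ∈ C₁, x ∈ S) → (∃ S ∈ C₁, y ∉ S) →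
    StrictPart (R r) x y

/-- IWS (independence from the worst set): if `≿ : Σ₁ ≻ ⋯ ≻ Σ_{l-1} ≻ Σ_l` (`l ≥ 2`)
and `≿'` is obtained from `≿` by partitioning the worst class `Σ_l` into ordered
classes `Γ₁ ≻' ⋯ ≻' Γ_{l'}`, then `x P_≿ y` implies `x P_≿' y`. -/
def IWS (R : (Finset X → Finset X → Prop) → X → X → Prop) : Prop :=
  ∀ (r r' : Finset X → Finset X → Prop) (L Γ : List (Finset (Finset X)))
    (W : Finset (Finset X)),
    L ≠ [] → IsClassList r (L ++ [W]) → IsClassList r' (L ++ Γ) →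
    ∀ x y : X, StrictPart (R r) x y → StrictPart (R r') x y

/-- IBS (independence from the best set): if `≿ : Σ₁ ≻ Σ₂ ≻ ⋯ ≻ Σ_l` (`l ≥ 2`)
and `≿'` is obtained from `≿` by partitioning the best class `Σ₁` into ordered
classes `Γ₁ ≻' ⋯ ≻' Γ_{l'}`, then `x P_≿ y` implies `x P_≿' y`. -/
def IBS (R : (Finset X → Finset X → Prop) → X → X → Prop) : Prop :=
  ∀ (r r' : Finset X → Finset X → Prop) (B : Finset (Finset X))
    (L Γ : List (Finset (Finset X))),
    L ≠ [] → IsClassList r (B :: L) → IsClassList r' (Γ ++ L) →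
    ∀ x y : X, StrictPart (R r) x y → StrictPart (R r') x y

/-- TO (tops-only): two weak orders with the same best equivalence class get the
same social ranking. -/
def TO (R : (Finset X → Finset X → Prop) → X → X → Prop) : Prop :=
  ∀ (r r' : Finset X → Finset X → Prop) (B : Finset (Finset X))
    (L L' : List (Finset (Finset X))),
    IsClassList r (B :: L) → IsClassList r' (B :: L') → R r = R r'

/-- The class list obtained from `L` by sliding `Δ` out of class `k₁` into class `k₂`
(`Σ_{k₁}` is replaced by `Σ_{k₁} \ Δ` and `Σ_{k₂}` by `Σ_{k₂} ∪ Δ`; if `Δ = Σ_{k₁}`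
the emptied class disappears). -/
def slide (L : List (Finset (Finset X))) (k₁ k₂ : ℕ) (Δ : Finset (Finset X)) :
    List (Finset (Finset X)) :=
  ((L.set k₁ ((L.getD k₁ ∅) \ Δ)).set k₂ ((L.getD k₂ ∅) ∪ Δ)).filter
    (fun C => decide (C ≠ ∅))

/-- SI (slide independence): sliding a proper subfamily `Δ ⊊ Σ_{k₁}` with
`|Δ[x]| = |Δ[y]|` into another class does not change the social ranking on `{x, y}`. -/
def SI (R : (Finset X → Finset X → Prop) → X → X → Prop) : Prop :=
  ∀ (r r' : Finset X → Finset X → Prop) (L : List (Finset (Finset X)))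
    (k₁ k₂ : ℕ) (x y : X) (Δ : Finset (Finset X)),
    IsClassList r L → k₁ < L.length → k₂ < L.length →
    Δ ⊂ L.getD k₁ ∅ → count Δ x = count Δ y →
    IsClassList r' (slide L k₁ k₂ Δ) →
    AgreeOn (R r) (R r') x y

/-- SSI (strong slide independence): as SI, but `Δ ⊆ Σ_{k₁}` may be the whole class
(in which case the class disappears). -/
def SSI (R : (Finset X → Finset X → Prop) → X → X → Prop) : Prop :=
  ∀ (r r' : Finset X → Finset X → Prop) (L : List (Finset (Finset X)))
    (k₁ k₂ : ℕ) (x y : X) (Δ : Finset (Finset X)),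
    IsClassList r L → k₁ < L.length → k₂ < L.length →
    Δ ⊆ L.getD k₁ ∅ → count Δ x = count Δ y →
    IsClassList r' (slide L k₁ k₂ Δ) →
    AgreeOn (R r) (R r') x y

/-- Top-SI: the condition of SI restricted to slides out of the best class (`k₁ = 1`,
i.e. index `0`). -/
def TopSI (R : (Finset X → Finset X → Prop) → X → X → Prop) : Prop :=
  ∀ (r r' : Finset X → Finset X → Prop) (L : List (Finset (Finset X)))
    (k₂ : ℕ) (x y : X) (Δ : Finset (Finset X)),
    IsClassList r L → 0 < L.length → k₂ < L.length →
    Δ ⊂ L.getD 0 ∅ → count Δ x = count Δ y →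
    IsClassList r' (slide L 0 k₂ Δ) →
    AgreeOn (R r) (R r') x y

/-- The class list of `≿' : Σ₁ ≻' ⋯ ≻' Σ_{k-1} ≻' Δ ≻' Σ_k \ Δ ≻' ⋯ ≻' Σ_l`
(empty classes disappear). -/
def inuiList (L : List (Finset (Finset X))) (k : ℕ) (Δ : Finset (Finset X)) :
    List (Finset (Finset X)) :=
  (L.take k ++ [Δ, (L.getD k ∅) \ Δ] ++ L.drop (k + 1)).filter
    (fun C => decide (C ≠ ∅))

/-- INUI (independence of non-unanimous improvements). -/
def INUI (R : (Finset X → Finset X → Prop) → X → X → Prop) : Prop :=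
  ∀ (r r' : Finset X → Finset X → Prop) (L : List (Finset (Finset X)))
    (k : ℕ) (Δ : Finset (Finset X)) (x y : X),
    IsClassList r L → k < L.length → Δ ⊆ L.getD k ∅ →
    (∃ S ∈ Δ, x ∉ S) → (∃ S ∈ Δ, y ∉ S) →
    IsClassList r' (inuiList L k Δ) →
    AgreeOn (R r) (R r') x y

/-- The weak order `≿_π := {(π(S), π(T)) : S ≿ T}` induced by a permutation `π` of `X`. -/
def permRel (π : Equiv.Perm X) (r : Finset X → Finset X → Prop) :
    Finset X → Finset X → Prop :=
  fun A B => r (A.image π.symm) (B.image π.symm)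

/-- NT (neutrality). -/
def NT (R : (Finset X → Finset X → Prop) → X → X → Prop) : Prop :=
  ∀ (π : Equiv.Perm X) (r : Finset X → Finset X → Prop), IsWeakOrder r →
    ∀ x y : X, (R (permRel π r) (π x) (π y) ↔ R r x y)

/-- IIC (independence of irrelevant coalitions). -/
def IIC (R : (Finset X → Finset X → Prop) → X → X → Prop) : Prop :=
  ∀ (r r' : Finset X → Finset X → Prop), IsWeakOrder r → IsWeakOrder r' →
    ∀ x y : X,
      (∀ S : Finset X, x ∉ S → y ∉ S →
        (r (insert x S) (insert y S) ↔ r' (insert x S) (insert y S))) →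
      (R r x y ↔ R r' x y)

/-! ### The social ranking solutions -/

/-- `θ_≿(x) = (|Σ₁[x]|, …, |Σ_l[x]|)`. -/
def theta (L : List (Finset (Finset X))) (x : X) : List ℕ := L.map (fun C => count C x)

/-- The lexicographic order `a ≥^L b` on vectors of naturals. -/
def GeLex (a b : List ℕ) : Prop :=
  a = b ∨ ∃ k < a.length, (∀ j < k, a.getD j 0 = b.getD j 0) ∧ b.getD k 0 < a.getD k 0

/-- The dual lexicographic order `a ≥^DL b` (read from the last coordinate;
fewer appearances in worse classes is better). -/
def GeDualLex (a b : List ℕ) : Prop :=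
  a = b ∨ ∃ k < a.length, (∀ j, k < j → a.getD j 0 = b.getD j 0) ∧ a.getD k 0 < b.getD k 0

/-- The lexicographic excellence solution `R^L` : `x R^L_≿ y ↔ θ_≿(x) ≥^L θ_≿(y)`. -/
def RL (r : Finset X → Finset X → Prop) (x y : X) : Prop :=
  ∀ L, IsClassList r L → GeLex (theta L x) (theta L y)

/-- The dual lexicographic excellence solution `R^DL`. -/
def RDL (r : Finset X → Finset X → Prop) (x y : X) : Prop :=
  ∀ L, IsClassList r L → GeDualLex (theta L x) (theta L y)

/-- Plurality `R^P` : `x R^P_≿ y ↔ |Σ₁[x]| ≥ |Σ₁[y]|`. -/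
def RP (r : Finset X → Finset X → Prop) (x y : X) : Prop :=
  ∀ L, IsClassList r L → count (L.getD 0 ∅) y ≤ count (L.getD 0 ∅) x

/-- `e_≿(x)` : the largest `k` such that `x` belongs to every coalition of each of the
first `k` equivalence classes (`0` if `x ∉ T₁`). -/
def eIIS (L : List (Finset (Finset X))) (x : X) : ℕ :=
  (L.takeWhile (fun C => decide (∀ S ∈ C, x ∈ S))).length

/-- The intersection initial segment rule `R^IIS` : `x R^IIS_≿ y ↔ e_≿(x) ≥ e_≿(y)`. -/
def RIIS (r : Finset X → Finset X → Prop) (x y : X) : Prop :=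
  ∀ L, IsClassList r L → eIIS L y ≤ eIIS L x

/-- The constant-`X` rule: everybody is ranked indifferent. -/
def RconstX : (Finset X → Finset X → Prop) → X → X → Prop := fun _ _ _ => True

/-- The split-plurality score `s^split_≿(z) = ∑_{S ∈ Σ₁ : z ∈ S} 1/|S|`. -/
def splitScore (C : Finset (Finset X)) (z : X) : ℚ :=
  ∑ S ∈ C.filter (fun S => z ∈ S), (1 : ℚ) / (S.card : ℚ)

/-- Split-plurality `R^splitP`. -/
def RsplitP (r : Finset X → Finset X → Prop) (x y : X) : Prop :=
  ∀ L, IsClassList r L → splitScore (L.getD 0 ∅) y ≤ splitScore (L.getD 0 ∅) x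

/-- Plurality with tie-breaking by a linear order `t = ▷` :
`x R^{P,▷}_≿ y ↔ (x P^P_≿ y ∨ (x I^P_≿ y ∧ x ▷ y))`. -/
def RPtie (t : X → X → Prop) (r : Finset X → Finset X → Prop) (x y : X) : Prop :=
  ∀ L, IsClassList r L →
    (count (L.getD 0 ∅) y < count (L.getD 0 ∅) x ∨
      (count (L.getD 0 ∅) x = count (L.getD 0 ∅) y ∧ t x y))


def Qr (r : Finset X → Finset X → Prop) (x y : X) : Prop :=
  ∀ T, x ∉ T → ∃ S, y ∉ S ∧ r S T

def IsPt (L : List (Finset (Finset X))) : Prop :=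
  (∀ C ∈ L, C.Nonempty) ∧ L.Pairwise Disjoint ∧ ∀ S : Finset X, ∃ C ∈ L, S ∈ C

theorem cl_idx {r : Finset X → Finset X → Prop} {L : List (Finset (Finset X))}
    (h : IsClassList r L) (S : Finset X) : ∃ i, i < L.length ∧ S ∈ L.getD i ∅ := by
  obtain ⟨i, hi, _⟩ := h.2.1 S
  exact ⟨i, hi⟩

theorem cl_uniq {r : Finset X → Finset X → Prop} {L : List (Finset (Finset X))}
    (h : IsClassList r L) {S : Finset X} {i j : ℕ} (hi : i < L.length) (hj : j < L.length)
    (hS : S ∈ L.getD i ∅) (hS' : S ∈ L.getD j ∅) : i = j :=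
  (h.2.1 S).unique ⟨hi, hS⟩ ⟨hj, hS'⟩

theorem cl_weak {r : Finset X → Finset X → Prop} {L : List (Finset (Finset X))}
    (h : IsClassList r L) : IsWeakOrder r := by
  refine ⟨fun S => ?_, fun S T => ?_, fun S T U h1 h2 => ?_⟩
  · obtain ⟨i, hi, hS⟩ := cl_idx h S
    exact (h.2.2 i i hi hi S hS S hS).2 le_rfl
  · obtain ⟨i, hi, hS⟩ := cl_idx h S
    obtain ⟨j, hj, hT⟩ := cl_idx h T
    rw [h.2.2 i j hi hj S hS T hT, h.2.2 j i hj hi T hT S hS]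
    exact le_total i j
  · obtain ⟨i, hi, hS⟩ := cl_idx h S
    obtain ⟨j, hj, hT⟩ := cl_idx h T
    obtain ⟨k, hk, hU⟩ := cl_idx h U
    rw [h.2.2 i j hi hj S hS T hT] at h1
    rw [h.2.2 j k hj hk T hT U hU] at h2
    rw [h.2.2 i k hi hk S hS U hU]
    exact h1.trans h2

theorem cl_pt {r : Finset X → Finset X → Prop} {L : List (Finset (Finset X))}
    (h : IsClassList r L) : IsPt L := by
  refine ⟨h.1, ?_, fun S => ?_⟩
  · rw [List.pairwise_iff_getElem]
    intro i j hi hj hij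
    rw [Finset.disjoint_left]
    intro S hS hS'
    have := cl_uniq h hi hj (S := S) (by rw [List.getD_eq_getElem _ _ hi]; exact hS)
      (by rw [List.getD_eq_getElem _ _ hj]; exact hS')
    omega
  · obtain ⟨i, hi, hS⟩ := cl_idx h S
    rw [List.getD_eq_getElem _ _ hi] at hS
    exact ⟨_, List.getElem_mem hi, hS⟩

theorem pt_cl {L : List (Finset (Finset X))} (h : IsPt L) : ∃ r, IsClassList r L := by
  have key : ∀ S : Finset X, ∃! i : ℕ, i < L.length ∧ S ∈ L.getD i ∅ := by
    intro S
    obtain ⟨C, hC, hS⟩ := h.2.2 S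
    obtain ⟨i, hi, rfl⟩ := List.getElem_of_mem hC
    refine ⟨i, ⟨hi, by rwa [List.getD_eq_getElem _ _ hi]⟩, ?_⟩
    rintro j ⟨hj, hS'⟩
    rw [List.getD_eq_getElem _ _ hj] at hS'
    have hp := List.pairwise_iff_getElem.1 h.2.1
    rcases lt_trichotomy i j with hl | hl | hl
    · exact absurd hS' (Finset.disjoint_left.1 (hp i j hi hj hl) hS)
    · exact hl.symm
    · exact absurd hS (Finset.disjoint_left.1 (hp j i hj hi hl) hS')
  choose f hf hf' using key
  refine ⟨fun S T => f S ≤ f T, h.1, fun S => ⟨f S, hf S, hf' S⟩, ?_⟩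
  intro i j hi hj S hS T hT
  rw [hf' S i ⟨hi, hS⟩, hf' T j ⟨hj, hT⟩]

theorem weak_cl {r : Finset X → Finset X → Prop} (h : IsWeakOrder r) :
    ∃ L, IsClassList r L := by
  classical
  obtain ⟨hr, hc, ht⟩ := h
  let f : Finset X → ℕ := fun S => (Finset.univ.filter (fun U => ¬ r S U)).card
  have hf : ∀ S T, r S T ↔ f S ≤ f T := by
    intro S T
    constructor
    · intro hST
      apply Finset.card_le_card
      intro U hU
      simp only [Finset.mem_filter, Finset.mem_univ, true_and] at hU ⊢
      exact fun hTU => hU (ht hST hTU)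
    · intro hle
      by_contra hST
      have hTS : r T S := (hc S T).resolve_left hST
      have : f T < f S := by
        apply Finset.card_lt_card
        rw [Finset.ssubset_iff_of_subset]
        · exact ⟨T, by simpa using hST, by simpa using hr T⟩
        · intro U hU
          simp only [Finset.mem_filter, Finset.mem_univ, true_and] at hU ⊢
          exact fun hSU => hU (ht hTS hSU)
      omega
  let N := (Finset.univ.image f).sort (· ≤ ·)
  have hN : N.Pairwise (· < ·) := Finset.sortedLT_sort _ |>.pairwise
  have hmem : ∀ n, n ∈ N ↔ ∃ S, f S = n := by intro n; simp [N]
  let L := N.map (fun n => Finset.univ.filter (fun S => f S = n))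
  have hp : IsPt L := by
    refine ⟨?_, ?_, ?_⟩
    · intro C hC
      obtain ⟨n, hn, rfl⟩ := List.mem_map.1 hC
      obtain ⟨S, hS⟩ := (hmem n).1 hn
      exact ⟨S, by simpa using hS⟩
    · rw [List.pairwise_map]
      refine hN.imp ?_
      intro a b hab
      rw [Finset.disjoint_left]
      intro S h1 h2
      simp only [Finset.mem_filter, Finset.mem_univ, true_and] at h1 h2
      omega
    · intro S
      exact ⟨_, List.mem_map.2 ⟨f S, (hmem _).2 ⟨S, rfl⟩, rfl⟩, by simp⟩
  obtain ⟨r', hr'⟩ := pt_cl hp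
  refine ⟨L, hp.1, hr'.2.1, ?_⟩
  intro i j hi hj S hS T hT
  have hi' : i < N.length := by simpa [L] using hi
  have hj' : j < N.length := by simpa [L] using hj
  rw [List.getD_eq_getElem _ _ hi] at hS
  rw [List.getD_eq_getElem _ _ hj] at hT
  simp only [L, List.getElem_map, Finset.mem_filter, Finset.mem_univ, true_and] at hS hT
  rw [hf, hS, hT]
  have hp := List.pairwise_iff_getElem.1 hN
  rcases lt_trichotomy i j with hl | hl | hl
  · have := hp i j hi' hj' hl
    constructor <;> intro <;> omega
  · subst hl; simp
  · have := hp j i hj' hi' hl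
    constructor <;> intro <;> omega

theorem e_lt (L : List (Finset (Finset X))) (x : X) :
    ∀ i, i < eIIS L x → ∀ S ∈ L.getD i ∅, x ∈ S := by
  induction L with
  | nil => simp
  | cons C M ih =>
    intro i hi S hS
    by_cases hC : ∀ S ∈ C, x ∈ S
    · have : eIIS (C :: M) x = eIIS M x + 1 := by
        unfold eIIS; rw [List.takeWhile_cons_of_pos (by simpa using hC)]; rfl
      cases i with
      | zero => exact hC S (by simpa using hS)
      | succ i => exact ih i (by omega) S (by simpa using hS)
    · have : eIIS (C :: M) x = 0 := by
        simp only [eIIS, List.takeWhile_cons, hC]; simp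
      omega

theorem e_fail (L : List (Finset (Finset X))) (x : X) (h : ∃ C ∈ L, ∃ S ∈ C, x ∉ S) :
    eIIS L x < L.length ∧ ∃ S ∈ L.getD (eIIS L x) ∅, x ∉ S := by
  induction L with
  | nil => simp at h
  | cons C M ih =>
    by_cases hC : ∀ S ∈ C, x ∈ S
    · have : eIIS (C :: M) x = eIIS M x + 1 := by
        unfold eIIS; rw [List.takeWhile_cons_of_pos (by simpa using hC)]; rfl
      rw [this]
      have h' : ∃ C ∈ M, ∃ S ∈ C, x ∉ S := by
        obtain ⟨D, hD, S, hS, hx⟩ := h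
        rcases List.mem_cons.1 hD with rfl | hD
        · exact absurd (hC S hS) hx
        · exact ⟨D, hD, S, hS, hx⟩
      simpa using ih h'
    · have : eIIS (C :: M) x = 0 := by
        simp only [eIIS, List.takeWhile_cons, hC]; simp
      rw [this]
      push Not at hC
      simpa using hC

theorem e_app (P M : List (Finset (Finset X))) (C : Finset (Finset X)) (x : X)
    (h : ∃ S ∈ C, x ∉ S) : eIIS (P ++ C :: M) x = eIIS P x := by
  have hC : ¬ ∀ S ∈ C, x ∈ S := by push Not; exact h
  induction P with
  | nil => simp only [eIIS, List.nil_append, List.takeWhile_cons, hC]; simp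
  | cons D P ih =>
    simp only [eIIS, List.cons_append, List.takeWhile_cons] at ih ⊢
    split_ifs
    · simpa using ih
    · rfl

theorem cl_fail {r : Finset X → Finset X → Prop} {L : List (Finset (Finset X))}
    (h : IsClassList r L) (x : X) :
    eIIS L x < L.length ∧ ∃ S ∈ L.getD (eIIS L x) ∅, x ∉ S := by
  apply e_fail
  obtain ⟨C, hC, hS⟩ := (cl_pt h).2.2 ∅
  exact ⟨C, hC, ∅, hS, by simp⟩

theorem e_iff {r : Finset X → Finset X → Prop} {L : List (Finset (Finset X))}
    (h : IsClassList r L) (x y : X) : eIIS L y ≤ eIIS L x ↔ Qr r x y := by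
  obtain ⟨hx, Sx, hSx, hxS⟩ := cl_fail h x
  obtain ⟨hy, Sy, hSy, hyS⟩ := cl_fail h y
  constructor
  · intro hle T hT
    obtain ⟨j, hj, hTj⟩ := cl_idx h T
    refine ⟨Sy, hyS, (h.2.2 _ j hy hj Sy hSy T hTj).2 ?_⟩
    by_contra hlt
    exact hT (e_lt L x j (by omega) T hTj)
  · intro hQ
    obtain ⟨S, hS, hr⟩ := hQ Sx hxS
    obtain ⟨j, hj, hSj⟩ := cl_idx h S
    have := (h.2.2 j _ hj hx S hSj Sx hSx).1 hr
    by_contra hlt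
    exact hS (e_lt L y j (by omega) S hSj)

theorem riis_e {r : Finset X → Finset X → Prop} {L : List (Finset (Finset X))}
    (h : IsClassList r L) (x y : X) : RIIS r x y ↔ eIIS L y ≤ eIIS L x :=
  ⟨fun hh => hh L h, fun hh L' h' => (e_iff h' x y).2 ((e_iff h x y).1 hh)⟩

theorem riis_q {r : Finset X → Finset X → Prop} (h : IsWeakOrder r) (x y : X) :
    RIIS r x y ↔ Qr r x y := by
  obtain ⟨L, hL⟩ := weak_cl h
  rw [riis_e hL, e_iff hL]

theorem strict_q {r : Finset X → Finset X → Prop} (h : IsWeakOrder r) (x y : X) :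
    StrictPart (RIIS r) x y ↔ ∃ T, y ∉ T ∧ ∀ S, x ∉ S → ¬ r S T := by
  have h1 : StrictPart (RIIS r) x y ↔ ¬ RIIS r y x := by
    obtain ⟨L, hL⟩ := weak_cl h
    rw [StrictPart, riis_e hL, riis_e hL]
    omega
  rw [h1, riis_q h, Qr]
  push Not
  rfl

theorem riis_NT {r : Finset X → Finset X → Prop} (π : Equiv.Perm X) (x y : X) :
    Qr (permRel π r) (π x) (π y) ↔ Qr r x y := by
  have him : ∀ T : Finset X, (T.image π).image π.symm = T := by
    intro T; ext a; simp
  have hm : ∀ (T : Finset X) (z : X), π z ∉ T ↔ z ∉ T.image π.symm := by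
    intro T z
    rw [not_iff_not]
    simp [Finset.mem_image, Equiv.symm_apply_eq]
  constructor
  · intro h T hT
    obtain ⟨S, hS, hr⟩ := h (T.image π) (by rw [hm, him]; exact hT)
    refine ⟨S.image π.symm, (hm S y).1 hS, ?_⟩
    have hr' : r (S.image π.symm) ((T.image π).image π.symm) := hr
    rwa [him] at hr'
  · intro h T hT
    obtain ⟨S, hS, hr⟩ := h (T.image π.symm) ((hm _ _).1 hT)
    refine ⟨S.image π, by rw [hm, him]; exact hS, ?_⟩
    change r ((S.image π).image π.symm) _
    rwa [him]

theorem riis_wivip : WIVIP (X := X) RIIS := by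
  intro r C₁ C₂ h x y hx hy
  rw [StrictPart, riis_e h, riis_e h]
  obtain ⟨S, hS, hyS⟩ := hy
  have h0 : eIIS [C₁, C₂] y = 0 := by
    simpa [eIIS] using e_app [] [C₂] C₁ y ⟨S, hS, hyS⟩
  have h1 : 0 < eIIS [C₁, C₂] x := by
    unfold eIIS; rw [List.takeWhile_cons_of_pos (by simpa using hx)]; simp
  omega

theorem riis_iws : IWS (X := X) RIIS := by
  intro r r' L Γ W _ h h' x y hs
  rw [strict_q (cl_weak h)] at hs
  rw [strict_q (cl_weak h')]
  obtain ⟨T, hT, hS⟩ := hs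
  refine ⟨T, hT, fun S hxS hr => ?_⟩
  obtain ⟨i, hi, hTi⟩ := cl_idx h T
  obtain ⟨e, he, hee⟩ := cl_idx h ∅
  have h1 := hS ∅ (by simp)
  rw [h.2.2 e i he hi _ hee _ hTi] at h1
  have hiL : i < L.length := by simp at he hi; omega
  have hi' : i < (L ++ Γ).length := by simp; omega
  have hTi' : T ∈ (L ++ Γ).getD i ∅ := by
    rw [List.getD_append _ _ _ _ hiL] at hTi ⊢; exact hTi
  obtain ⟨j, hj, hSj⟩ := cl_idx h' S
  rw [h'.2.2 j i hj hi' _ hSj _ hTi'] at hr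
  have hjL : j < L.length := by omega
  apply hS S hxS
  rw [List.getD_append _ _ _ _ hjL] at hSj
  refine (h.2.2 j i (by simp; omega) hi S ?_ T hTi).2 hr
  rw [List.getD_append _ _ _ _ hjL]; exact hSj

theorem riis_ibs : IBS (X := X) RIIS := by
  intro r r' B L Γ _ h h' x y hs
  rw [strict_q (cl_weak h)] at hs
  rw [strict_q (cl_weak h')]
  obtain ⟨T, hT, hS⟩ := hs
  have key : ∀ U : Finset X, ∀ j, j < L.length → U ∈ L.getD j ∅ →
      (j + 1 < (B :: L).length ∧ U ∈ (B :: L).getD (j+1) ∅) ∧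
      (Γ.length + j < (Γ ++ L).length ∧ U ∈ (Γ ++ L).getD (Γ.length + j) ∅) := by
    intro U j hj hU
    refine ⟨⟨by simpa using hj, by simpa using hU⟩, by simpa using hj, ?_⟩
    rw [List.getD_append_right _ _ _ _ (by omega)]
    simpa using hU
  refine ⟨T, hT, fun S hxS hr => ?_⟩
  obtain ⟨i, hi, hTi⟩ := cl_idx h T
  obtain ⟨j, hj, hSj⟩ := cl_idx h S
  have h1 := hS S hxS
  rw [h.2.2 j i hj hi _ hSj _ hTi] at h1
  obtain ⟨j, rfl⟩ : ∃ j', j = j' + 1 := ⟨j - 1, by omega⟩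
  have hj' : j < L.length := by simpa using hj
  obtain ⟨hSa, hSb⟩ := key S j hj' (by simpa using hSj)
  obtain ⟨k, hk, hTk⟩ := cl_idx h' T
  rw [h'.2.2 _ k hSb.1 hk _ hSb.2 _ hTk] at hr
  have hk2 : Γ.length ≤ k := by omega
  rw [List.getD_append_right _ _ _ _ hk2] at hTk
  rw [List.length_append] at hk
  obtain ⟨hTa, _⟩ := key T (k - Γ.length) (by omega) hTk
  have := cl_uniq h hi hTa.1 hTi hTa.2
  omega

theorem list_split (L : List (Finset (Finset X))) (k : ℕ) (hk : k < L.length) :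
    L = L.take k ++ L.getD k ∅ :: L.drop (k+1) := by
  rw [List.getD_eq_getElem _ _ hk]
  simp

theorem filter_ne (L : List (Finset (Finset X))) (h : ∀ C ∈ L, C.Nonempty) :
    L.filter (fun C => decide (C ≠ ∅)) = L := by
  rw [List.filter_eq_self]
  intro C hC
  simpa using (h C hC).ne_empty

theorem riis_inui : INUI (X := X) RIIS := by
  intro r r' L k Δ x y h hk hΔ hx hy h'
  have key : ∀ z, (∃ S ∈ Δ, z ∉ S) → eIIS L z = eIIS (inuiList L k Δ) z := by
    intro z hz
    obtain ⟨S, hS, hzS⟩ := hz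
    have h1 : eIIS L z = eIIS (L.take k) z := by
      conv_lhs => rw [list_split L k hk]
      exact e_app _ _ _ _ ⟨S, hΔ hS, hzS⟩
    have hne : Δ ≠ ∅ := by rintro rfl; simp at hS
    have h2 : inuiList L k Δ = L.take k ++ Δ ::
        ([(L.getD k ∅) \ Δ] ++ L.drop (k + 1)).filter (fun C => decide (C ≠ ∅)) := by
      unfold inuiList
      rw [List.append_assoc, List.filter_append,
        filter_ne (L.take k) (fun C hC => h.1 C (List.mem_of_mem_take hC))]
      congr 1
      rw [show [Δ, L.getD k ∅ \ Δ] ++ L.drop (k+1) =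
        Δ :: ([L.getD k ∅ \ Δ] ++ L.drop (k+1)) from rfl, List.filter_cons_of_pos (by simpa using hne)]
    rw [h1, h2, e_app _ _ _ _ ⟨S, hS, hzS⟩]
  intro a ha b hb
  have hz : ∀ z ∈ ({x, y} : Set X), ∃ S ∈ Δ, z ∉ S := by
    rintro z (rfl | rfl)
    · exact hx
    · exact hy
  rw [riis_e h, riis_e h', key a (hz a ha), key b (hz b hb)]

def bigU (L : List (Finset (Finset X))) : Finset (Finset X) :=
  Finset.univ.filter (fun S => ∃ C ∈ L, S ∈ C)

theorem mem_bigU {L : List (Finset (Finset X))} {S : Finset X} :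
    S ∈ bigU L ↔ ∃ C ∈ L, S ∈ C := by simp [bigU]

theorem bigU_ne {L : List (Finset (Finset X))} (h : ∀ C ∈ L, C.Nonempty) (hL : L ≠ []) :
    (bigU L).Nonempty := by
  obtain ⟨C, hC⟩ := List.exists_mem_of_ne_nil L hL
  obtain ⟨S, hS⟩ := h C hC
  exact ⟨S, mem_bigU.2 ⟨C, hC, hS⟩⟩

theorem disj_bigU {A : Finset (Finset X)} {L : List (Finset (Finset X))}
    (h : ∀ C ∈ L, Disjoint A C) : Disjoint A (bigU L) := by
  rw [Finset.disjoint_left]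
  intro S hS hS'
  obtain ⟨C, hC, hSC⟩ := mem_bigU.1 hS'
  exact Finset.disjoint_left.1 (h C hC) hS hSC

theorem pt_merge {P M N : List (Finset (Finset X))} (h : IsPt (P ++ M ++ N)) (hM : M ≠ []) :
    IsPt (P ++ [bigU M] ++ N) := by
  obtain ⟨h1, h2, h3⟩ := h
  simp only [List.pairwise_append, List.mem_append] at h1 h2 h3
  obtain ⟨⟨hP, hMp, hPM⟩, hN, hPN⟩ := h2
  refine ⟨?_, ?_, ?_⟩
  · intro C hC
    simp only [List.mem_append, List.mem_singleton] at hC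
    rcases hC with (hC | rfl) | hC
    · exact h1 C (Or.inl (Or.inl hC))
    · exact bigU_ne (fun C hC => h1 C (Or.inl (Or.inr hC))) hM
    · exact h1 C (Or.inr hC)
  · simp only [List.pairwise_append, List.mem_append, List.mem_singleton]
    refine ⟨⟨hP, List.pairwise_singleton _ _, ?_⟩, hN, ?_⟩
    · rintro a ha b rfl
      exact disj_bigU (fun C hC => hPM a ha C hC)
    · rintro a (ha | rfl) b hb
      · exact hPN a (Or.inl ha) b hb
      · exact (disj_bigU (fun C hC => (hPN C (Or.inr hC) b hb).symm)).symm
  · intro S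
    obtain ⟨C, (hC | hC) | hC, hS⟩ := h3 S
    · exact ⟨C, by simp [hC], hS⟩
    · exact ⟨bigU M, by simp, mem_bigU.2 ⟨C, hC, hS⟩⟩
    · exact ⟨C, by simp [hC], hS⟩

theorem bigU_cons (C : Finset (Finset X)) (L : List (Finset (Finset X))) :
    bigU (C :: L) = C ∪ bigU L := by
  ext S; simp [mem_bigU]

theorem bigU_single (C : Finset (Finset X)) : bigU [C] = C := by
  ext S; simp [mem_bigU]

theorem inui_merge {R : (Finset X → Finset X → Prop) → X → X → Prop} (hI : INUI R) (x y : X)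
    (P M : List (Finset (Finset X))) : ∀ (C : Finset (Finset X)) (r r' : _),
    IsClassList r (P ++ C :: M) → IsClassList r' (P ++ [bigU (C :: M)]) →
    (∃ S ∈ C, x ∉ S) → (∃ S ∈ C, y ∉ S) → AgreeOn (R r') (R r) x y := by
  induction M with
  | nil =>
    intro C r r' h h' hx hy
    rw [bigU_single] at h'
    have : r = r' := by
      funext S T
      obtain ⟨i, hi, hS⟩ := cl_idx h S
      obtain ⟨j, hj, hT⟩ := cl_idx h T
      exact propext ((h.2.2 i j hi hj S hS T hT).trans (h'.2.2 i j hi hj S hS T hT).symm)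
    subst this
    intro a _ b _; rfl
  | cons D M ih =>
    intro C r r' h h' hx hy
    have hpt := cl_pt h
    have h2 : IsPt (P ++ [bigU [C, D]] ++ M) := by
      apply pt_merge _ (by simp)
      simpa using hpt
    have h2' : IsPt (P ++ (C ∪ D) :: M) := by
      rw [bigU_cons, bigU_single] at h2
      simpa using h2
    obtain ⟨s, hs⟩ := pt_cl h2'
    have e1 : bigU (C :: D :: M) = bigU ((C ∪ D) :: M) := by
      simp [bigU_cons, Finset.union_assoc]
    rw [e1] at h'
    have mono : ∀ z, (∃ S ∈ C, z ∉ S) → (∃ S ∈ C ∪ D, z ∉ S) := by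
      rintro z ⟨S, hS, hz⟩
      exact ⟨S, Finset.mem_union_left _ hS, hz⟩
    have a1 := ih (C ∪ D) s r' hs h' (mono x hx) (mono y hy)
    have hCD : Disjoint C D := by
      have := hpt.2.1
      rw [List.pairwise_append, List.pairwise_cons] at this
      exact this.2.1.1 D (by simp)
    have hget : (P ++ (C ∪ D) :: M).getD P.length ∅ = C ∪ D := by
      rw [List.getD_append_right _ _ _ _ le_rfl]; simp
    have hlist : inuiList (P ++ (C ∪ D) :: M) P.length C = P ++ C :: D :: M := by
      unfold inuiList
      rw [hget, Finset.union_sdiff_cancel_left hCD]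
      rw [← filter_ne (P ++ C :: D :: M) hpt.1]
      congr 1
      simp
    have a2 := hI s r (P ++ (C ∪ D) :: M) P.length C x y hs (by simp)
      (by rw [hget]; exact Finset.subset_union_left) hx hy (by rw [hlist]; exact h)
    intro a ha b hb
    exact (a1 a ha b hb).trans (a2 a ha b hb)

theorem strict_of {R : (Finset X → Finset X → Prop) → X → X → Prop}
    (hW : WIVIP R) (hIW : IWS R) (hIB : IBS R) {r : Finset X → Finset X → Prop}
    {L : List (Finset (Finset X))} (h : IsClassList r L) {x y : X}
    (hlt : eIIS L y < eIIS L x) : StrictPart (R r) x y := by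
  obtain ⟨hx, Sx, hSx, hxS⟩ := cl_fail h x
  obtain ⟨hy, Sy, hSy, hyS⟩ := cl_fail h y
  set k := eIIS L y with hk
  have hsplit : L.take (k+1) ++ L.drop (k+1) = L := List.take_append_drop _ _
  have hA : L.take (k+1) ≠ [] := by
    intro hh; have := congrArg List.length hh; simp at this; subst this; simp at hx
  have hB : L.drop (k+1) ≠ [] := by
    intro hh; have := congrArg List.length hh; simp at this; omega
  have hp := cl_pt h
  have p1 : IsPt ([] ++ [bigU (L.take (k+1))] ++ L.drop (k+1)) := by
    apply pt_merge _ hA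
    simpa using hp
  have p2 : IsPt ([bigU (L.take (k+1))] ++ [bigU (L.drop (k+1))] ++ []) := by
    apply pt_merge _ hB
    simpa using p1
  obtain ⟨r1, hr1⟩ := pt_cl p1
  obtain ⟨r2, hr2⟩ := pt_cl p2
  have hs2 : StrictPart (R r2) x y := by
    apply hW r2 _ _ (by simpa using hr2) x y
    · intro S hS
      obtain ⟨C, hC, hSC⟩ := mem_bigU.1 hS
      obtain ⟨i, hi, rfl⟩ := List.getElem_of_mem hC
      rw [List.length_take] at hi
      apply e_lt L x i (by omega)
      rw [List.getElem_take] at hSC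
      rwa [List.getD_eq_getElem _ _ (by omega)]
    · refine ⟨Sy, mem_bigU.2 ⟨L.getD k ∅, ?_, hSy⟩, hyS⟩
      rw [List.getD_eq_getElem _ _ hy, List.mem_take_iff_getElem]
      exact ⟨k, by omega, rfl⟩
  have hs1 : StrictPart (R r1) x y :=
    hIW r2 r1 [bigU (L.take (k+1))] (L.drop (k+1)) (bigU (L.drop (k+1))) (by simp)
      (by simpa using hr2) (by simpa using hr1) x y hs2
  exact hIB r1 r (bigU (L.take (k+1))) (L.drop (k+1)) (L.take (k+1)) hB
    (by simpa using hr1) (by rw [hsplit]; exact h) x y hs1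

theorem swap_fix {x y : X} {S : Finset X} (hx : x ∈ S) (hy : y ∈ S) :
    S.image (Equiv.swap x y) = S := by
  apply Finset.eq_of_subset_of_card_le
  · intro a ha
    obtain ⟨b, hb, rfl⟩ := Finset.mem_image.1 ha
    rw [Equiv.swap_apply_def]
    split_ifs <;> assumption
  · rw [Finset.card_image_of_injective _ (Equiv.swap x y).injective]

theorem swap_swap_im (x y : X) (S : Finset X) :
    (S.image (Equiv.swap x y)).image (Equiv.swap x y) = S := by
  ext a; simp [Finset.mem_image]

theorem indiff_of {R : (Finset X → Finset X → Prop) → X → X → Prop} (hR : IsSRS R)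
    (hNT : NT R) (hI : INUI R) {r : Finset X → Finset X → Prop}
    {L : List (Finset (Finset X))} (h : IsClassList r L) {x y : X}
    (he : eIIS L y = eIIS L x) : R r x y := by
  obtain ⟨hx, Sx, hSx, hxS⟩ := cl_fail h x
  obtain ⟨hy, Sy, hSy, hyS⟩ := cl_fail h y
  rw [he] at hSy hy
  set k := eIIS L x with hk
  have hsplit := list_split L k hx
  set P := L.take k with hP
  set C := L.getD k ∅ with hC
  set M := L.drop (k+1) with hM
  have hPc : ∀ D ∈ P, ∀ S ∈ D, x ∈ S ∧ y ∈ S := by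
    intro D hD S hS
    obtain ⟨i, hi, rfl⟩ := List.getElem_of_mem hD
    have hi2 := hi
    rw [hP, List.length_take] at hi2
    have hS' : S ∈ L.getD i ∅ := by
      rw [List.getD_eq_getElem _ _ (by omega)]
      simpa [hP] using hS
    exact ⟨e_lt L x i (by omega) S hS', e_lt L y i (by omega) S hS'⟩
  have hp := cl_pt h
  have p1 : IsPt (P ++ [bigU (C :: M)] ++ []) := by
    apply pt_merge _ (by simp)
    rw [List.append_nil, ← hsplit]; exact hp
  rw [List.append_nil] at p1
  obtain ⟨s, hs⟩ := pt_cl p1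
  have hag := inui_merge hI x y P M C r s (by rw [← hsplit]; exact h) hs
    ⟨Sx, hSx, hxS⟩ ⟨Sy, hSy, hyS⟩
  have hfix : ∀ S D, D ∈ P ++ [bigU (C :: M)] → S ∈ D → S.image (Equiv.swap x y) ∈ D := by
    intro S D hD hS
    rcases List.mem_append.1 hD with hD' | hD'
    · have := hPc D hD' S hS
      rwa [swap_fix this.1 this.2]
    · obtain ⟨E, hE, hSE⟩ := p1.2.2 (S.image (Equiv.swap x y))
      rcases List.mem_append.1 hE with hE' | hE'
      · have := hPc E hE' _ hSE
        have h3 := swap_fix this.1 this.2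
        rw [swap_swap_im] at h3
        rwa [← h3]
      · rw [List.mem_singleton] at hD' hE'
        rwa [hD', ← hE']
  have hperm : permRel (Equiv.swap x y) s = s := by
    funext S T
    obtain ⟨i, hi, hS⟩ := cl_idx hs S
    obtain ⟨j, hj, hT⟩ := cl_idx hs T
    have hm : ∀ i, i < (P ++ [bigU (C :: M)]).length →
        (P ++ [bigU (C :: M)]).getD i ∅ ∈ P ++ [bigU (C :: M)] := by
      intro i hi
      rw [List.getD_eq_getElem _ _ hi]; exact List.getElem_mem hi
    refine propext (Iff.trans ?_ (hs.2.2 i j hi hj S hS T hT).symm)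
    unfold permRel
    rw [Equiv.symm_swap]
    exact hs.2.2 i j hi hj _ (hfix S _ (hm i hi) hS) _ (hfix T _ (hm j hj) hT)
  have hsw := cl_weak hs
  have hn := hNT (Equiv.swap x y) s hsw x y
  rw [hperm, Equiv.swap_apply_left, Equiv.swap_apply_right] at hn
  have : R s x y := by
    rcases (hR s hsw).2.1 x y with h1 | h1
    · exact h1
    · exact hn.1 h1
  exact (hag x (by simp) y (by simp)).1 this

/-- Theorem (characterization of the intersection initial segment rule, `|X| ≥ 3`):
an SRS satisfies NT, WIVIP, IWS, IBS and INUI iff it is `R^IIS`. -/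
theorem iis_characterization (hX : 3 ≤ Fintype.card X)
    (R : (Finset X → Finset X → Prop) → X → X → Prop) (hR : IsSRS R) :
    (NT R ∧ WIVIP R ∧ IWS R ∧ IBS R ∧ INUI R) ↔ (∀ r, IsWeakOrder r → R r = RIIS r) := by
  constructor
  · rintro ⟨hNT, hW, hIW, hIB, hI⟩ r hr
    obtain ⟨L, hL⟩ := weak_cl hr
    funext x y
    rw [eq_iff_iff, riis_e hL]
    rcases lt_trichotomy (eIIS L y) (eIIS L x) with h | h | h
    · exact iff_of_true (strict_of hW hIW hIB hL h).1 h.le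
    · exact iff_of_true (indiff_of hR hNT hI hL h) h.le
    · exact iff_of_false (strict_of hW hIW hIB hL h).2 (by omega)
  · intro h
    refine ⟨?_, ?_, ?_, ?_, ?_⟩
    · intro π r hr x y
      have hr' : IsWeakOrder (permRel π r) :=
        ⟨fun S => hr.1 _, fun S T => hr.2.1 _ _, fun S T U h1 h2 => hr.2.2 h1 h2⟩
      rw [h r hr, h _ hr', riis_q hr, riis_q hr', riis_NT]
    · intro r C₁ C₂ hc
      rw [h r (cl_weak hc)]
      exact riis_wivip r C₁ C₂ hc
    · intro r r' L Γ W hL hc hc'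
      rw [h r (cl_weak hc), h r' (cl_weak hc')]
      exact riis_iws r r' L Γ W hL hc hc'
    · intro r r' B L Γ hL hc hc'
      rw [h r (cl_weak hc), h r' (cl_weak hc')]
      exact riis_ibs r r' B L Γ hL hc hc'
    · intro r r' L k Δ x y hc hk hΔ hx hy hc'
      rw [h r (cl_weak hc), h r' (cl_weak hc')]
      exact riis_inui r r' L k Δ x y hc hk hΔ hx hy hc'

end SocialRanking
end

section
/- For any finite nonempty set X, any ≿ ∈ ℛ(𝔛), and any x, y ∈ X: if x P^IIS_≿ y (x is strictly above y under the intersection initial segment rule), then x P^L_≿ y (x is strictly above y under the lexicographic excellence solution) and x R^P_≿ y (x is weakly above y under plurality). -/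
/-!
Social ranking solutions (SRSs).  The set of individuals is a finite type `X`;
coalitions are elements of `Finset X` (so the domain of a power relation is the
whole power set `𝔛 = 2^X`).  A weak order `≿ ∈ ℛ(𝔛)` is encoded as a relation
`r : Finset X → Finset X → Prop` together with (when needed) its list of
equivalence classes `L = [Σ₁, …, Σ_l]` in strictly decreasing order
(`IsClassList r L`).
-/

namespace SocialRanking

variable {X : Type*} [Fintype X] [DecidableEq X]

theorem classList_le {r : Finset X → Finset X → Prop} {L L' : List (Finset (Finset X))}
    (h : IsClassList r L) (h' : IsClassList r L') :
    ∀ n, n < L.length → ∀ S ∈ L.getD n ∅, ∀ m, m < L'.length → S ∈ L'.getD m ∅ → n ≤ m := by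
  intro n
  induction n with
  | zero => intros; omega
  | succ n ih =>
    intro hn S hS m hm hSm
    have hn' : n < L.length := by omega
    have hne : (L.getD n ∅).Nonempty := by
      apply h.1
      rw [List.getD_eq_getElem _ _ hn']
      exact List.getElem_mem hn'
    obtain ⟨T, hT⟩ := hne
    obtain ⟨k, ⟨hk, hTk⟩, -⟩ := h'.2.1 T
    have h1 := ih hn' T hT k hk hTk
    have h2 := h.2.2 (n+1) n hn hn' S hS T hT
    have h3 := h'.2.2 m k hm hk S hSm T hTk
    have h4 : ¬ m ≤ k := fun hh => by
      have := h2.1 (h3.2 hh)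
      omega
    omega

theorem classList_eq_index {r : Finset X → Finset X → Prop} {L L' : List (Finset (Finset X))}
    (h : IsClassList r L) (h' : IsClassList r L') (n : ℕ) (hn : n < L.length)
    (S : Finset X) (hS : S ∈ L.getD n ∅) : n < L'.length ∧ S ∈ L'.getD n ∅ := by
  obtain ⟨k, ⟨hk, hSk⟩, -⟩ := h'.2.1 S
  have h1 := classList_le h h' n hn S hS k hk hSk
  have h2 := classList_le h' h k hk S hSk n hn hS
  obtain rfl : n = k := by omega
  exact ⟨hk, hSk⟩

theorem classList_length {r : Finset X → Finset X → Prop} {L L' : List (Finset (Finset X))}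
    (h : IsClassList r L) (h' : IsClassList r L') : L.length ≤ L'.length := by
  by_contra hlt
  have hn : L'.length < L.length := by omega
  have hne : (L.getD L'.length ∅).Nonempty := by
    apply h.1
    rw [List.getD_eq_getElem _ _ hn]
    exact List.getElem_mem hn
  obtain ⟨T, hT⟩ := hne
  have := (classList_eq_index h h' _ hn T hT).1
  omega

theorem classList_unique {r : Finset X → Finset X → Prop} {L L' : List (Finset (Finset X))}
    (h : IsClassList r L) (h' : IsClassList r L') : L = L' := by
  apply List.ext_getElem (le_antisymm (classList_length h h') (classList_length h' h))
  intro n h1 h2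
  ext S
  have a := classList_eq_index h h' n h1 S
  have b := classList_eq_index h' h n h2 S
  rw [List.getD_eq_getElem _ _ h1, List.getD_eq_getElem _ _ h2] at a b
  exact ⟨fun q => (a q).2, fun q => (b q).2⟩

theorem count_le_card (C : Finset (Finset X)) (y : X) : count C y ≤ C.card :=
  Finset.card_filter_le _ _

theorem count_eq_card {C : Finset (Finset X)} {x : X} (h : ∀ S ∈ C, x ∈ S) :
    count C x = C.card := by
  unfold count
  rw [Finset.filter_true_of_mem h]

theorem count_lt_card {C : Finset (Finset X)} {x : X} (h : ¬ ∀ S ∈ C, x ∈ S) :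
    count C x < C.card := by
  unfold count
  push Not at h
  obtain ⟨S, hS, hx⟩ := h
  exact Finset.card_lt_card (Finset.filter_ssubset.2 ⟨S, hS, hx⟩)

theorem lex_core (x y : X) : ∀ L : List (Finset (Finset X)), eIIS L y < eIIS L x →
    (∃ k < L.length, (∀ j < k, (theta L x).getD j 0 = (theta L y).getD j 0) ∧
      (theta L y).getD k 0 < (theta L x).getD k 0) ∧
    count (L.getD 0 ∅) y ≤ count (L.getD 0 ∅) x := by
  intro L
  induction L with
  | nil => intro h; simp [eIIS] at h
  | cons C L ih =>
    intro h
    by_cases hx : ∀ S ∈ C, x ∈ S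
    · have hcx := count_eq_card hx
      refine ⟨?_, ?_⟩
      · by_cases hy : ∀ S ∈ C, y ∈ S
        · have hcy := count_eq_card hy
          have h' : eIIS L y < eIIS L x := by
            simp only [eIIS] at h ⊢
            rw [List.takeWhile_cons_of_pos (by simpa using hy),
              List.takeWhile_cons_of_pos (by simpa using hx)] at h
            simpa using h
          obtain ⟨⟨k, hk, h1, h2⟩, -⟩ := ih h'
          refine ⟨k + 1, by simpa using hk, ?_, by simpa [theta] using h2⟩
          intro j hj
          cases j with
          | zero => simp [theta, hcx, hcy]
          | succ j => simpa [theta] using h1 j (by omega)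
        · have hcy := count_lt_card hy
          exact ⟨0, by simp, by intro j hj; omega, by simpa [theta, hcx] using hcy⟩
      · have := count_le_card C y
        simpa [hcx] using this
    · exfalso
      simp only [eIIS] at h
      rw [List.takeWhile_cons_of_neg (a := C) (p := fun C => decide (∀ S ∈ C, x ∈ S))
        (by simpa using hx)] at h
      simp at h

/-- If `x P^IIS_≿ y` then `x P^L_≿ y` and `x R^P_≿ y`. -/
theorem iis_strict_implies [Nonempty X] (r : Finset X → Finset X → Prop)
    (hr : IsWeakOrder r) (x y : X) (h : StrictPart (RIIS r) x y) :
    StrictPart (RL r) x y ∧ RP r x y := by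
  obtain ⟨-, h2⟩ := h
  unfold RIIS at h2
  push Not at h2
  obtain ⟨L, hL, hlt⟩ := h2
  obtain ⟨⟨k, hk, h1, h2⟩, h3⟩ := lex_core x y L hlt
  refine ⟨⟨?_, ?_⟩, ?_⟩
  · intro L' hL'
    obtain rfl := classList_unique hL hL'
    exact Or.inr ⟨k, by simpa [theta] using hk, h1, h2⟩
  · intro hyx
    rcases hyx L hL with he | ⟨m, hm, h4, h5⟩
    · rw [he] at h2
      exact lt_irrefl _ h2
    · rcases lt_trichotomy k m with hkm | hkm | hkm
      · have := h4 k hkm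
        omega
      · subst hkm
        omega
      · have := h1 m hkm
        omega
  · intro L' hL'
    obtain rfl := classList_unique hL hL'
    exact h3

end SocialRanking
end
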